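/- Let N ⊆ M_m be a unital *-subalgebra, p ∈ [1/2, ∞] and ρ ∈ M_m a density. Then D_p(ρ‖N) ≥ 0, and D_p(ρ‖N) = 0 if and only if ρ ∈ N. -/

import Mathlib

open scoped ENNReal Classical ComplexOrder
open Matrix

noncomputable section

namespace GJL

variable {n : Type*} [Fintype n] [DecidableEq n]

/-- `Mat n` is the matrix *-algebra with rows and columns indexed by `n`. -/
abbrev Mat (n : Type*) [Fintype n] [DecidableEq n] := Matrix n n ℂ

/-- A density matrix: positive semidefinite with trace one. -/
def IsDensity (ρ : Mat n) : Prop := ρ.PosSemidef ∧ ρ.trace = 1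

/-- The real part of the (matrix) trace. -/
def traceR (A : Mat n) : ℝ := (A.trace).re

/-- Real matrix powers via the continuous functional calculus.  For positive
semidefinite matrices and negative exponents this is the generalized inverse
power on the support, since `(0 : ℝ) ^ r = 0` for `r ≠ 0`. -/
def mpow (A : Mat n) (r : ℝ) : Mat n := cfc (fun x : ℝ => x ^ r) A

/-- Matrix logarithm on the support (`Real.log 0 = 0`). -/
def mlog (A : Mat n) : Mat n := cfc Real.log A

/-- Schatten `p`-norm `(Tr ((x* x)^(p/2)))^(1/p)`. -/
def snorm (p : ℝ) (x : Mat n) : ℝ := (traceR (mpow (xᴴ * x) (p/2))) ^ (1/p)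

/-- Operator norm `‖x‖_∞`. -/
def opNorm (x : Mat n) : ℝ := ‖(Matrix.toEuclideanCLM (𝕜 := ℂ) x : EuclideanSpace ℂ n →L[ℂ] EuclideanSpace ℂ n)‖

/-- The support projection of `ρ` is dominated by that of `σ` (for positive
semidefinite matrices: `ker σ ⊆ ker ρ`). -/
def suppLe (ρ σ : Mat n) : Prop := ∀ v, σ.mulVec v = 0 → ρ.mulVec v = 0

/-- `e` is the support projection of `ρ`. -/
def IsSupportProj (ρ e : Mat n) : Prop :=
  e.IsHermitian ∧ e * e = e ∧ ∀ v, e.mulVec v = 0 ↔ ρ.mulVec v = 0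

/-- `D_∞(ρ‖σ) = log min {λ ≥ 0 | ρ ≤ λ σ}`, `⊤` if no such `λ` exists. -/
def Dinf (ρ σ : Mat n) : EReal :=
  if ∃ c : ℝ, 0 ≤ c ∧ (c • σ - ρ).PosSemidef then
    ((Real.log (sInf {c : ℝ | 0 ≤ c ∧ (c • σ - ρ).PosSemidef}) : ℝ) : EReal)
  else ⊤

/-- Umegaki relative entropy `D(ρ‖σ) = Tr(ρ log ρ - ρ log σ)`, `⊤` if the
support condition fails. -/
def DU (ρ σ : Mat n) : EReal :=
  if suppLe ρ σ then ((traceR (ρ * mlog ρ - ρ * mlog σ) : ℝ) : EReal) else ⊤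

/-- The sandwiched matrix `σ^{(1-p)/(2p)} ρ σ^{(1-p)/(2p)}`; note that for
`p > 1` the exponent `(1-p)/(2p)` equals `-1/(2p')` with `1/p + 1/p' = 1`. -/
def sandwich (p : ℝ) (ρ σ : Mat n) : Mat n :=
  mpow σ ((1 - p)/(2*p)) * ρ * mpow σ ((1 - p)/(2*p))

/-- The sandwiched Rényi relative entropy `D_p(ρ‖σ)` for `p ∈ [1/2, ∞]`:
for `p ∈ (1,∞)` it is `p' log ‖σ^{-1/(2p')} ρ σ^{-1/(2p')}‖_p
= (p-1)⁻¹ log Tr ((σ^{-1/(2p')} ρ σ^{-1/(2p')})^p)` when the support of `ρ` is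
dominated by that of `σ` and `⊤` otherwise; for `p ∈ [1/2, 1)` it is
`(p-1)⁻¹ log Tr ((σ^{(1-p)/(2p)} ρ σ^{(1-p)/(2p)})^p)` (`⊤` when the trace
vanishes, i.e. when the honest value is `+∞`); `D_1` is the Umegaki relative
entropy and `D_∞` the max-relative entropy. -/
def Dp (p : ℝ≥0∞) (ρ σ : Mat n) : EReal :=
  if p = ⊤ then Dinf ρ σ
  else if p = 1 then DU ρ σ
  else if 1 < p.toReal ∧ ¬ suppLe ρ σ then ⊤
  else if traceR (mpow (sandwich p.toReal ρ σ) p.toReal) = 0 then ⊤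
  else (((p.toReal - 1)⁻¹ * Real.log (traceR (mpow (sandwich p.toReal ρ σ) p.toReal)) : ℝ) : EReal)

/-- `D_p(ρ‖S) = inf { D_p(ρ‖σ) | σ a density in S }`. -/
def DpSet (p : ℝ≥0∞) (ρ : Mat n) (S : Set (Mat n)) : EReal :=
  ⨅ σ ∈ {σ ∈ S | IsDensity σ}, Dp p ρ σ

/-- `D_p(A‖S) = sup { D_p(ρ‖S) | ρ a density in A }`. -/
def DpRel (p : ℝ≥0∞) (A S : Set (Mat n)) : EReal :=
  ⨆ ρ ∈ {ρ ∈ A | IsDensity ρ}, DpSet p ρ S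

open scoped Kronecker in
/-- The algebraic tensor product `N₁ ⊗ N₂ ⊆ M_{n₁} ⊗ M_{n₂} = M_{n₁ × n₂}`,
realized as the linear span of Kronecker products. -/
def tensorSpan {n₁ n₂ : Type*} [Fintype n₁] [DecidableEq n₁] [Fintype n₂] [DecidableEq n₂]
    (N₁ : Set (Mat n₁)) (N₂ : Set (Mat n₂)) : Set (Mat (n₁ × n₂)) :=
  ↑(Submodule.span ℂ {z : Mat (n₁ × n₂) | ∃ x ∈ N₁, ∃ y ∈ N₂, z = x ⊗ₖ y})

/-- `D_{p,cb}(M‖N) = sup_k D_p(M_k ⊗ M ‖ M_k ⊗ N)`. -/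
def DpCb (p : ℝ≥0∞) (N : Set (Mat n)) : EReal :=
  ⨆ k : ℕ, DpRel p Set.univ (tensorSpan (Set.univ : Set (Mat (Fin k))) N)

/-- `E` is the trace preserving conditional expectation onto `N`, i.e. the
orthogonal projection onto `N` with respect to the Hilbert–Schmidt inner
product `⟨x,y⟩ = Tr(x* y)`. -/
def IsCondExp (N : Set (Mat n)) (E : Mat n →ₗ[ℂ] Mat n) : Prop :=
  (∀ x, E x ∈ N) ∧ (∀ x ∈ N, E x = x) ∧
    ∀ x y, y ∈ N → ((E x)ᴴ * y).trace = (xᴴ * y).trace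

/-- The Pimsner–Popa index constant
`λ(M:N) = max {c ≥ 0 | c x ≤ E(x) for all x ≥ 0}`. -/
def ppIndex (E : Mat n →ₗ[ℂ] Mat n) : ℝ :=
  sSup {c : ℝ | 0 ≤ c ∧ ∀ x : Mat n, x.PosSemidef → (E x - c • x).PosSemidef}

/-- von Neumann entropy `H(ρ) = -Tr(ρ log ρ)`. -/
def vnEntropy (ρ : Mat n) : ℝ := - traceR (ρ * mlog ρ)

/-- The amplification `id_{M_k} ⊗ Φ` acting on `M_k ⊗ M_n = M_{k × n}`,
applying `Φ` blockwise. -/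
def ampFun (k : Type*) [Fintype k] [DecidableEq k] (Φ : Mat n →ₗ[ℂ] Mat n)
    (X : Mat (k × n)) : Mat (k × n) :=
  Matrix.of fun a b => Φ (Matrix.of fun s t => X (a.1, s) (b.1, t)) a.2 b.2

/-- Complete positivity: all amplifications `id_{M_k} ⊗ Φ` preserve positive
semidefiniteness. -/
def IsCP (Φ : Mat n →ₗ[ℂ] Mat n) : Prop :=
  ∀ (k : ℕ) (X : Mat (Fin k × n)), X.PosSemidef → (ampFun (Fin k) Φ X).PosSemidef

/-- Completely positive and trace preserving. -/
def IsCPTP (Φ : Mat n →ₗ[ℂ] Mat n) : Prop :=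
  IsCP Φ ∧ ∀ x : Mat n, (Φ x).trace = x.trace

/-!
Let `u_i` and `v_j` be eigenbases of positive semidefinite matrices `A` and `B`. Since
`Tr (f(A) g(B)) = ∑ i j, |⟨u_i, v_j⟩|² f(a_i) g(b_j)`, scalar inequalities between eigenvalues
become trace inequalities. Young's inequality and `log t ≤ t - 1`, refined by a multiple of
`(√x - √y)²`, thus acquire the squared Hellinger distance `Tr (√A - √B)²` as a remainder.

For densities `ρ` and `σ` put `X = σ^{(1-p)/(2p)} ρ σ^{(1-p)/(2p)}` and `Q = Tr X^p`. The refined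
Young inequality for `X^p` and `σ` bounds a multiple of their squared Hellinger distance by `Q - 1`
when `p > 1` and by `1 - Q` when `p < 1`; for `p = 1` the relative entropy bounds that of `ρ`
and `σ`. For `p = ∞`, `ρ ≤ c σ` forces `c ≥ 1` on taking traces. Hence `D_p ≥ 0`.

If the infimum over a closed set is zero, compactness gives densities `σ_k → τ` in the set with
`D_p(ρ‖σ_k) → 0`. For `p = 1` the Hellinger bound gives `σ_k → ρ`, and for `p = ∞` the limit
`τ - ρ` of `c_k σ_k - ρ` is positive semidefinite with trace zero, so `ρ = τ`. For finite `p ≠ 1`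
the Hellinger bound gives `X_k^p → τ`, so `X_k → τ^{1/p}`, and undoing the sandwiching yields
`ρ = τ`. When `p < 1` the negative power of `σ_k` that undoes it is not continuous in `σ_k`, so one
first passes to the limit in `X_k` and then undoes the sandwiching at `τ`, which recovers `ρ`
compressed to the support of `τ`; comparing traces shows that the compression loses nothing.
-/

open Filter Topology

section Trace

lemma traceR_sub (A B : Mat n) : traceR (A - B) = traceR A - traceR B := by
  simp only [traceR, trace_sub, Complex.sub_re]

lemma traceR_neg (A : Mat n) : traceR (-A) = -traceR A := by
  simp only [traceR, trace_neg, Complex.neg_re]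

lemma traceR_smul (c : ℝ) (A : Mat n) : traceR (c • A) = c * traceR A := by
  simp only [traceR, trace_smul, Complex.smul_re, smul_eq_mul]

lemma traceR_mul_comm (A B : Mat n) : traceR (A * B) = traceR (B * A) := by
  rw [traceR, trace_mul_comm, traceR]

lemma traceR_nonneg {A : Mat n} (hA : A.PosSemidef) : 0 ≤ traceR A :=
  (Complex.nonneg_iff.mp hA.trace_nonneg).1

lemma ofReal_traceR {A : Mat n} (hA : A.PosSemidef) : (traceR A : ℂ) = A.trace :=
  Complex.ext rfl (Complex.nonneg_iff.mp hA.trace_nonneg).2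

lemma eq_zero_of_traceR_nonpos {A : Mat n} (hA : A.PosSemidef) (h : traceR A ≤ 0) : A = 0 := by
  rw [← hA.trace_eq_zero_iff, ← ofReal_traceR hA, h.antisymm (traceR_nonneg hA),
    Complex.ofReal_zero]

lemma IsDensity.traceR_eq_one {ρ : Mat n} (hρ : IsDensity ρ) : traceR ρ = 1 := by
  rw [traceR, hρ.2, Complex.one_re]

end Trace

section FunctionalCalculus

variable {A : Mat n}

lemma continuousOn_spectrum (f : ℝ → ℝ) (A : Mat n) : ContinuousOn f (spectrum ℝ A) :=
  Matrix.finite_real_spectrum.continuousOn f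

lemma isHermitian_cfc (f : ℝ → ℝ) (A : Mat n) : (cfc f A).IsHermitian :=
  cfc_predicate f A

lemma cfc_id_of_isHermitian (hA : A.IsHermitian) : cfc (fun x : ℝ => x) A = A :=
  cfc_id' ℝ A hA

lemma cfc_cfc (g f : ℝ → ℝ) (hA : A.IsHermitian) :
    cfc g (cfc f A) = cfc (fun x => g (f x)) A :=
  (cfc_comp' g f A ((Matrix.finite_real_spectrum.image f).continuousOn g)
    (continuousOn_spectrum f A) hA).symm

lemma cfc_mul_cfc (f g : ℝ → ℝ) (A : Mat n) :
    cfc f A * cfc g A = cfc (fun x => f x * g x) A :=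
  (cfc_mul f g A (continuousOn_spectrum f A) (continuousOn_spectrum g A)).symm

lemma cfc_mul_self (hA : A.IsHermitian) (f : ℝ → ℝ) :
    cfc f A * A = cfc (fun x => f x * x) A := by
  rw [← cfc_mul_cfc f (fun x => x), cfc_id_of_isHermitian hA]

lemma self_mul_cfc (hA : A.IsHermitian) (f : ℝ → ℝ) :
    A * cfc f A = cfc (fun x => x * f x) A := by
  rw [← cfc_mul_cfc (fun x => x) f, cfc_id_of_isHermitian hA]

lemma nonneg_of_mem_spectrum (hA : A.PosSemidef) {x : ℝ} (hx : x ∈ spectrum ℝ A) : 0 ≤ x := by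
  obtain ⟨i, rfl⟩ := hA.1.spectrum_real_eq_range_eigenvalues ▸ hx
  exact hA.eigenvalues_nonneg i

lemma cfc_congr_of_posSemidef (hA : A.PosSemidef) {f g : ℝ → ℝ}
    (h : ∀ x, 0 ≤ x → f x = g x) : cfc f A = cfc g A :=
  cfc_congr fun x hx => h x (nonneg_of_mem_spectrum hA hx)

lemma cfc_sqrt_mul_self (hA : A.PosSemidef) {f : ℝ → ℝ} (hf : ∀ x, 0 ≤ x → 0 ≤ f x) :
    (cfc (fun x => √(f x)) A)ᴴ * cfc (fun x => √(f x)) A = cfc f A := by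
  rw [isHermitian_cfc, cfc_mul_cfc]
  exact cfc_congr_of_posSemidef hA fun x hx => Real.mul_self_sqrt (hf x hx)

lemma posSemidef_cfc (hA : A.PosSemidef) {f : ℝ → ℝ} (hf : ∀ x, 0 ≤ x → 0 ≤ f x) :
    (cfc f A).PosSemidef :=
  cfc_sqrt_mul_self hA hf ▸ posSemidef_conjTranspose_mul_self _

lemma sqrt_conjTranspose_mul_sqrt (hA : A.PosSemidef) :
    (cfc Real.sqrt A)ᴴ * cfc Real.sqrt A = A :=
  (cfc_sqrt_mul_self hA fun _ hx => hx).trans (cfc_id_of_isHermitian hA.1)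

open scoped Matrix.Norms.L2Operator in
lemma tendsto_cfc {ι : Type*} {l : Filter ι} {B : ι → Mat n} {f : ℝ → ℝ} (hf : Continuous f)
    (hB : ∀ k, (B k).IsHermitian) (hA : A.IsHermitian) (h : Tendsto B l (𝓝 A)) :
    Tendsto (fun k => cfc f (B k)) l (𝓝 (cfc f A)) := by
  have hcont : ContinuousOn (fun X : Mat n => cfc f X) {X | IsSelfAdjoint X} :=
    continuousOn_id.cfc_of_mem_nhdsSet f (s := Set.univ) Filter.univ_mem (fun _ hX => hX)
      hf.continuousOn
  exact (hcont A hA).tendsto.comp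
    (tendsto_nhdsWithin_iff.mpr ⟨h, Eventually.of_forall hB⟩)

end FunctionalCalculus

section Powers

variable {A : Mat n} {s t : ℝ}

lemma isHermitian_mpow (A : Mat n) (s : ℝ) : (mpow A s).IsHermitian :=
  isHermitian_cfc _ A

lemma posSemidef_mpow (hA : A.PosSemidef) (s : ℝ) : (mpow A s).PosSemidef :=
  posSemidef_cfc hA fun _ hx => Real.rpow_nonneg hx s

lemma mpow_one (hA : A.IsHermitian) : mpow A 1 = A := by
  simpa only [mpow, Real.rpow_one] using cfc_id_of_isHermitian hA

lemma mpow_mul_mpow (hA : A.PosSemidef) (hst : s + t ≠ 0) :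
    mpow A s * mpow A t = mpow A (s + t) := by
  rw [mpow, mpow, cfc_mul_cfc]
  exact cfc_congr_of_posSemidef hA fun x hx => (Real.rpow_add' hx hst).symm

lemma mpow_mpow (hA : A.PosSemidef) (s t : ℝ) : mpow (mpow A s) t = mpow A (s * t) := by
  rw [mpow, mpow, cfc_cfc _ _ hA.1]
  exact cfc_congr_of_posSemidef hA fun x hx => (Real.rpow_mul hx s t).symm

lemma mpow_mul_mpow_mul_mpow (hA : A.PosSemidef) (hst : s + t ≠ 0) (hsts : s + t + s ≠ 0) :
    mpow A s * mpow A t * mpow A s = mpow A (s + t + s) := by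
  rw [mpow_mul_mpow hA hst, mpow_mul_mpow hA hsts]

lemma tendsto_mpow {ι : Type*} {l : Filter ι} {B : ι → Mat n} (hs : 0 ≤ s)
    (hB : ∀ k, (B k).PosSemidef) (hA : A.PosSemidef) (h : Tendsto B l (𝓝 A)) :
    Tendsto (fun k => mpow (B k) s) l (𝓝 (mpow A s)) :=
  tendsto_cfc (Real.continuous_rpow_const hs) (fun k => (hB k).1) hA.1 h

end Powers

section Support

variable {A B ρ σ P X : Mat n}

lemma suppLe_refl (A : Mat n) : suppLe A A := fun _ hv => hv

lemma suppLe.trans {C : Mat n} (hAB : suppLe A B) (hBC : suppLe B C) : suppLe A C :=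
  fun v hv => hAB v (hBC v hv)

lemma suppLe.mul_left (X : Mat n) (h : suppLe A B) : suppLe (X * A) B := fun v hv => by
  rw [← mulVec_mulVec, h v hv, mulVec_zero]

lemma suppLe.mul_eq_zero (h : suppLe A B) (hX : B * X = 0) : A * X = 0 :=
  ext_of_mulVec_single fun i => by
    rw [← mulVec_mulVec, h _ (by rw [mulVec_mulVec, hX, zero_mulVec]), zero_mulVec]

lemma suppLe_cfc (hA : A.IsHermitian) {f : ℝ → ℝ} (hf : f 0 = 0) : suppLe (cfc f A) A := by
  have hfactor : cfc f A = cfc (fun x => f x / x) A * A := by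
    rw [cfc_mul_self hA]
    exact congrArg (cfc · A) <| funext fun x =>
      (div_mul_cancel_of_imp fun hx => by rw [hx, hf]).symm
  exact hfactor ▸ (suppLe_refl A).mul_left _

lemma suppLe_mpow (hA : A.IsHermitian) {s : ℝ} (hs : s ≠ 0) : suppLe (mpow A s) A :=
  suppLe_cfc hA (Real.zero_rpow hs)

/-- The support projection of a Hermitian matrix. -/
def supportProj (A : Mat n) : Mat n := cfc (fun x : ℝ => if x = 0 then 0 else 1) A

lemma isHermitian_supportProj (A : Mat n) : (supportProj A).IsHermitian :=
  isHermitian_cfc _ A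

lemma isStarProjection_supportProj (A : Mat n) : IsStarProjection (supportProj A) where
  isIdempotentElem := by
    rw [IsIdempotentElem, supportProj, cfc_mul_cfc]
    congr! 2
    split_ifs <;> simp
  isSelfAdjoint := isHermitian_supportProj A

lemma suppLe_supportProj (hA : A.IsHermitian) : suppLe (supportProj A) A :=
  suppLe_cfc hA (if_pos rfl)

lemma mul_supportProj (hA : A.IsHermitian) : A * supportProj A = A := by
  rw [supportProj, self_mul_cfc hA]
  conv_rhs => rw [← cfc_id_of_isHermitian hA]
  exact congrArg (cfc · A) <| funext fun x => by
    rw [mul_ite, mul_zero, mul_one, ite_eq_right_iff]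
    exact Eq.symm

lemma mpow_mul_mpow_neg (hA : A.PosSemidef) {s : ℝ} (hs : s ≠ 0) :
    mpow A s * mpow A (-s) = supportProj A := by
  rw [mpow, mpow, cfc_mul_cfc]
  refine cfc_congr_of_posSemidef hA fun x hx => ?_
  rcases hx.eq_or_lt with rfl | hx
  · simp [hs]
  · rw [← Real.rpow_add hx, add_neg_cancel, Real.rpow_zero, if_neg hx.ne']

lemma suppLe.mul_supportProj (h : suppLe ρ σ) (hσ : σ.IsHermitian) : ρ * supportProj σ = ρ := by
  have hker : σ * (1 - supportProj σ) = 0 := by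
    rw [mul_sub, mul_one, GJL.mul_supportProj hσ, sub_self]
  have := h.mul_eq_zero hker
  rwa [mul_sub, mul_one, sub_eq_zero, eq_comm] at this

lemma suppLe.supportProj_mul_mul_supportProj (h : suppLe ρ σ) (hρ : ρ.IsHermitian)
    (hσ : σ.IsHermitian) : supportProj σ * ρ * supportProj σ = ρ := by
  rw [mul_assoc, h.mul_supportProj hσ]
  have := congrArg conjTranspose (h.mul_supportProj hσ)
  rwa [conjTranspose_mul, hρ.eq, (isHermitian_supportProj σ).eq] at this

lemma traceR_compression (hP : IsStarProjection P) (A : Mat n) :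
    traceR (P * A * P) = traceR (A * P) := by
  rw [traceR_mul_comm, ← mul_assoc, hP.isIdempotentElem.eq, traceR_mul_comm]

lemma posSemidef_compression (hP : IsStarProjection P) (hA : A.PosSemidef) :
    (P * A * P).PosSemidef := by
  have := hA.conjTranspose_mul_mul_same P
  rwa [show Pᴴ = P from hP.isSelfAdjoint] at this

lemma traceR_mul_le (hP : IsStarProjection P) (hA : A.PosSemidef) :
    traceR (A * P) ≤ traceR A := by
  have h := traceR_nonneg (posSemidef_compression hP.one_sub hA)
  rwa [traceR_compression hP.one_sub, mul_sub, mul_one, traceR_sub, sub_nonneg] at h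

lemma compression_eq_self_of_traceR_eq (hP : IsStarProjection P) (hA : A.PosSemidef)
    (h : traceR (A * P) = traceR A) : P * A * P = A := by
  have hPH : Pᴴ = P := hP.isSelfAdjoint
  obtain ⟨B, rfl⟩ : ∃ B, A = Bᴴ * B := ⟨_, (sqrt_conjTranspose_mul_sqrt hA).symm⟩
  have hsq : (B * (1 - P))ᴴ * (B * (1 - P)) = (1 - P) * (Bᴴ * B) * (1 - P) := by
    rw [conjTranspose_mul, conjTranspose_sub, conjTranspose_one, hPH]
    simp only [mul_assoc]
  have hcompl : B * (1 - P) = 0 := by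
    rw [← conjTranspose_mul_self_eq_zero, hsq]
    refine eq_zero_of_traceR_nonpos (posSemidef_compression hP.one_sub hA) ?_
    rw [traceR_compression hP.one_sub, mul_sub, mul_one, traceR_sub, h, sub_self]
  have hBP : B * P = B := by rwa [mul_sub, mul_one, sub_eq_zero, eq_comm] at hcompl
  have hPB : P * Bᴴ = Bᴴ := by rw [← hPH, ← conjTranspose_mul, hBP]
  rw [← mul_assoc, hPB, mul_assoc, hBP]

end Support

section JointSpectrum

variable {A B : Mat n}

/-- The joint spectral weights `|⟨uᵢ, vⱼ⟩|²` of two Hermitian matrices, where `uᵢ` and `vⱼ` are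
their eigenvector bases. They turn trace inequalities for functions of `A` and `B` into scalar
inequalities between eigenvalues. -/
def eigenOverlap (hA : A.IsHermitian) (hB : B.IsHermitian) (i j : n) : ℝ :=
  Complex.normSq (((hA.eigenvectorUnitary : Mat n)ᴴ * (hB.eigenvectorUnitary : Mat n)) i j)

lemma eigenOverlap_nonneg (hA : A.IsHermitian) (hB : B.IsHermitian) (i j : n) :
    0 ≤ eigenOverlap hA hB i j :=
  Complex.normSq_nonneg _

lemma traceR_diagonal_mul_mul_diagonal_mul (a b : n → ℝ) (W : Mat n) :
    traceR (diagonal (fun i => (a i : ℂ)) * W * (diagonal (fun j => (b j : ℂ)) * Wᴴ)) =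
      ∑ i, ∑ j, Complex.normSq (W i j) * (a i * b j) := by
  simp only [traceR, trace, diag_apply, mul_apply (M := diagonal _ * W), diagonal_mul,
    Complex.re_sum, conjTranspose_apply]
  refine Finset.sum_congr rfl fun i _ => Finset.sum_congr rfl fun j _ => ?_
  have hentry : (a i * W i j) * (b j * star (W i j)) =
      ((a i * b j * Complex.normSq (W i j) : ℝ) : ℂ) := by
    rw [mul_mul_mul_comm, Complex.star_def, Complex.mul_conj]
    push_cast; rfl
  rw [hentry, Complex.ofReal_re, mul_comm]

lemma cfc_eq_conj_diagonal (hA : A.IsHermitian) (f : ℝ → ℝ) :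
    cfc f A = (hA.eigenvectorUnitary : Mat n) * diagonal (fun i => (f (hA.eigenvalues i) : ℂ)) *
      (hA.eigenvectorUnitary : Mat n)ᴴ := by
  rw [hA.cfc_eq, IsHermitian.cfc, Unitary.conjStarAlgAut_apply]
  rfl

lemma traceR_cfc_mul_cfc (hA : A.IsHermitian) (hB : B.IsHermitian) (f g : ℝ → ℝ) :
    traceR (cfc f A * cfc g B) =
      ∑ i, ∑ j, eigenOverlap hA hB i j * (f (hA.eigenvalues i) * g (hB.eigenvalues j)) := by
  rw [cfc_eq_conj_diagonal hA, cfc_eq_conj_diagonal hB]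
  simp only [eigenOverlap]
  rw [← traceR_diagonal_mul_mul_diagonal_mul, conjTranspose_mul, conjTranspose_conjTranspose,
    mul_assoc, mul_assoc, traceR_mul_comm]
  simp only [mul_assoc]

lemma traceR_cfc_left (hA : A.IsHermitian) (hB : B.IsHermitian) (f : ℝ → ℝ) :
    traceR (cfc f A) = ∑ i, ∑ j, eigenOverlap hA hB i j * f (hA.eigenvalues i) := by
  simpa only [cfc_const_one (p := IsSelfAdjoint) ℝ B hB, mul_one] using
    traceR_cfc_mul_cfc hA hB f fun _ => 1

lemma traceR_cfc_right (hA : A.IsHermitian) (hB : B.IsHermitian) (g : ℝ → ℝ) :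
    traceR (cfc g B) = ∑ i, ∑ j, eigenOverlap hA hB i j * g (hB.eigenvalues j) := by
  simpa only [cfc_const_one (p := IsSelfAdjoint) ℝ A hA, one_mul] using
    traceR_cfc_mul_cfc hA hB (fun _ => 1) g

lemma suppLe.eigenvalues_eq_zero (h : suppLe A B) {hA : A.IsHermitian} {hB : B.IsHermitian}
    {i j : n} (hij : eigenOverlap hA hB i j ≠ 0) (hj : hB.eigenvalues j = 0) :
    hA.eigenvalues i = 0 := by
  let kerInd : ℝ → ℝ := fun x => if x = 0 then 1 else 0
  have hker : B * cfc kerInd B = 0 := by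
    rw [self_mul_cfc hB, show (fun x => x * kerInd x) = fun _ => 0 by ext; simp [kerInd],
      cfc_const_zero]
  have hzero : supportProj A * cfc kerInd B = 0 :=
    ((suppLe_supportProj hA).trans h).mul_eq_zero hker
  have hsum := traceR_cfc_mul_cfc hA hB (fun x => if x = 0 then 0 else 1) kerInd
  have hterm (i j : n) : 0 ≤ eigenOverlap hA hB i j *
      ((if hA.eigenvalues i = 0 then 0 else 1) * kerInd (hB.eigenvalues j)) :=
    mul_nonneg (eigenOverlap_nonneg hA hB i j)
      (mul_nonneg (by split_ifs <;> simp) (by unfold kerInd; split_ifs <;> simp))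
  rw [← supportProj, hzero, traceR, trace_zero, Complex.zero_re, eq_comm,
    Finset.sum_eq_zero_iff_of_nonneg fun i _ => Finset.sum_nonneg fun j _ => hterm i j] at hsum
  have hzero_ij := (Finset.sum_eq_zero_iff_of_nonneg fun j _ => hterm i j).mp
    (hsum i (Finset.mem_univ i)) j (Finset.mem_univ j)
  simpa [kerInd, hij, hj] using hzero_ij

end JointSpectrum

section Hellinger

variable {A B : Mat n}

/-- The squared Hellinger distance `Tr (√A - √B)²` of positive semidefinite matrices. -/
def hellingerSq (A B : Mat n) : ℝ :=
  traceR ((cfc Real.sqrt A - cfc Real.sqrt B)ᴴ * (cfc Real.sqrt A - cfc Real.sqrt B))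

lemma hellingerSq_nonneg (A B : Mat n) : 0 ≤ hellingerSq A B :=
  traceR_nonneg (posSemidef_conjTranspose_mul_self _)

lemma hellingerSq_eq_sum (hA : A.IsHermitian) (hB : B.IsHermitian) :
    hellingerSq A B = ∑ i, ∑ j, eigenOverlap hA hB i j *
      (√(hA.eigenvalues i) - √(hB.eigenvalues j)) ^ 2 := by
  have hexpand : hellingerSq A B = traceR (cfc (fun x => √x * √x) A) +
      traceR (cfc (fun x => √x * √x) B) - 2 * traceR (cfc Real.sqrt A * cfc Real.sqrt B) := by
    rw [hellingerSq, ((isHermitian_cfc _ A).sub (isHermitian_cfc _ B)).eq, sub_mul, mul_sub,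
      mul_sub, traceR_sub, traceR_sub, traceR_sub, traceR_mul_comm (cfc _ B) (cfc _ A),
      cfc_mul_cfc, cfc_mul_cfc]
    ring
  rw [hexpand, traceR_cfc_left hA hB, traceR_cfc_right hA hB,
    traceR_cfc_mul_cfc hA hB]
  simp only [Finset.mul_sum, ← Finset.sum_add_distrib, ← Finset.sum_sub_distrib]
  refine Finset.sum_congr rfl fun i _ => Finset.sum_congr rfl fun j _ => by ring

lemma mul_hellingerSq_le_of_eigenvalues_le (hA : A.IsHermitian) (hB : B.IsHermitian) {c : ℝ}
    {f g h k : ℝ → ℝ}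
    (hle : ∀ i j, eigenOverlap hA hB i j ≠ 0 →
      c * (√(hA.eigenvalues i) - √(hB.eigenvalues j)) ^ 2 ≤
        h (hA.eigenvalues i) + k (hB.eigenvalues j) +
          f (hA.eigenvalues i) * g (hB.eigenvalues j)) :
    c * hellingerSq A B ≤
      traceR (cfc h A) + traceR (cfc k B) + traceR (cfc f A * cfc g B) := by
  rw [hellingerSq_eq_sum hA hB, traceR_cfc_left hA hB, traceR_cfc_right hA hB,
    traceR_cfc_mul_cfc hA hB]
  simp only [Finset.mul_sum, ← Finset.sum_add_distrib, ← mul_add, mul_left_comm c]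
  refine Finset.sum_le_sum fun i _ => Finset.sum_le_sum fun j _ => ?_
  rcases eq_or_ne (eigenOverlap hA hB i j) 0 with hij | hij
  · rw [hij, zero_mul, zero_mul]
  · exact mul_le_mul_of_nonneg_left (hle i j hij) (eigenOverlap_nonneg hA hB i j)

end Hellinger

section ScalarInequalities

variable {x y r : ℝ}

lemma mul_sq_sqrt_sub_sqrt_le_of_lt_one (hx : 0 ≤ x) (hy : 0 ≤ y) (hr₀ : 0 < r) (hr₁ : r < 1) :
    r * (1 - r) * (√x - √y) ^ 2 ≤ r * x + (1 - r) * y - x ^ r * y ^ (1 - r) := by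
  have hsplit : x ^ (r ^ 2) * y ^ ((1 - r) ^ 2) * (√x * √y) ^ (2 * r * (1 - r)) =
      x ^ r * y ^ (1 - r) := by
    have hx' : x ^ (r ^ 2) * √x ^ (2 * r * (1 - r)) = x ^ r := by
      have hexp : r ^ 2 + 1 / 2 * (2 * r * (1 - r)) = r := by ring
      rw [Real.sqrt_eq_rpow, ← Real.rpow_mul hx, ← Real.rpow_add' hx (hexp.trans_ne hr₀.ne'), hexp]
    have hy' : y ^ ((1 - r) ^ 2) * √y ^ (2 * r * (1 - r)) = y ^ (1 - r) := by
      have hexp : (1 - r) ^ 2 + 1 / 2 * (2 * r * (1 - r)) = 1 - r := by ring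
      rw [Real.sqrt_eq_rpow, ← Real.rpow_mul hy,
        ← Real.rpow_add' hy (hexp.trans_ne (sub_pos.mpr hr₁).ne'), hexp]
    rw [Real.mul_rpow (Real.sqrt_nonneg x) (Real.sqrt_nonneg y), mul_mul_mul_comm, hx', hy']
  -- These weights give `x, y, √x √y` the mean `r x + (1 - r) y - r (1 - r) (√x - √y) ^ 2`.
  have hamgm := Real.geom_mean_le_arith_mean3_weighted (sq_nonneg r) (sq_nonneg (1 - r))
    (by nlinarith : 0 ≤ 2 * r * (1 - r)) hx hy (by positivity : 0 ≤ √x * √y) (by ring)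
  rw [hsplit] at hamgm
  rw [sub_sq, Real.sq_sqrt hx, Real.sq_sqrt hy]
  linarith

lemma mul_sq_sqrt_sub_sqrt_le_of_one_lt (hx : 0 ≤ x) (hy : 0 ≤ y) (hxy : y = 0 → x = 0)
    (hr : 1 < r) :
    (r - 1) * (√x - √y) ^ 2 ≤ x ^ r * y ^ (1 - r) - r * x + (r - 1) * y := by
  rcases hy.eq_or_lt with rfl | hy
  · simp [hxy rfl, (zero_lt_one.trans hr).ne']
  rcases hx.eq_or_lt with rfl | hx
  · simp [Real.sq_sqrt hy.le, (zero_lt_one.trans hr).ne']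
  -- In terms of `u = √(x / y)` the difference of the two sides is the Bernoulli gap times `u y`.
  obtain ⟨u, hu, rfl⟩ : ∃ u, 0 < u ∧ x = u ^ 2 * y :=
    ⟨√(x / y), by positivity, by rw [Real.sq_sqrt (by positivity)]; field_simp⟩
  have hbernoulli : 1 + (2 * r - 1) * (u - 1) ≤ u ^ (2 * r - 1) := by
    simpa using one_add_mul_self_le_rpow_one_add (s := u - 1) (by linarith)
      (by linarith : 1 ≤ 2 * r - 1)
  have hpow : (u ^ 2 * y) ^ r * y ^ (1 - r) = u * u ^ (2 * r - 1) * y := by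
    rw [Real.mul_rpow (by positivity) hy.le, mul_assoc, ← Real.rpow_add hy, add_sub_cancel,
      Real.rpow_one, ← Real.rpow_natCast, ← Real.rpow_mul hu.le,
      ← Real.rpow_one_add' hu.le (by linarith)]
    norm_num
  rw [hpow, Real.sqrt_mul (sq_nonneg u), Real.sqrt_sq hu.le]
  have hsq : (u * √y - √y) ^ 2 = (u - 1) ^ 2 * y := by
    rw [← sub_one_mul, mul_pow, Real.sq_sqrt hy.le]
  rw [hsq]
  have := mul_le_mul_of_nonneg_left hbernoulli (mul_pos hu hy).le
  linarith

lemma sq_sqrt_sub_sqrt_le_log (hx : 0 ≤ x) (hy : 0 ≤ y) (hxy : y = 0 → x = 0) :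
    (√x - √y) ^ 2 ≤ x * Real.log x - x * Real.log y - x + y := by
  rcases hx.eq_or_lt with rfl | hx
  · simp [Real.sq_sqrt hy]
  have hy : 0 < y := hy.lt_of_ne fun h => hx.ne' (hxy h.symm)
  have hlog := Real.log_le_sub_one_of_pos (x := √y / √x) (by positivity)
  rw [Real.log_div (by positivity) (by positivity), Real.log_sqrt hx.le,
    Real.log_sqrt hy.le] at hlog
  have hmul : x * (√y / √x) = √x * √y := by
    rw [mul_div_left_comm, Real.div_sqrt, mul_comm]
  have := mul_le_mul_of_nonneg_left hlog hx.le
  rw [sub_sq, Real.sq_sqrt hx.le, Real.sq_sqrt hy.le]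
  linarith

end ScalarInequalities

section TraceInequalities

variable {A B : Mat n} {r : ℝ}

lemma traceR_cfc_const_mul (hA : A.IsHermitian) (c : ℝ) :
    traceR (cfc (fun x => c * x) A) = c * traceR A := by
  rw [← traceR_smul]
  exact congrArg traceR (cfc_const_mul_id c A hA)

lemma mul_hellingerSq_le_of_lt_one (hA : A.PosSemidef) (hB : B.PosSemidef) (hr₀ : 0 < r)
    (hr₁ : r < 1) :
    r * (1 - r) * hellingerSq A B ≤
      r * traceR A + (1 - r) * traceR B - traceR (mpow A r * mpow B (1 - r)) := by
  have h := mul_hellingerSq_le_of_eigenvalues_le hA.1 hB.1 (h := (r * ·)) (k := ((1 - r) * ·))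
    (f := fun x => -x ^ r) (g := (· ^ (1 - r))) fun i j _ =>
      (mul_sq_sqrt_sub_sqrt_le_of_lt_one (hA.eigenvalues_nonneg i) (hB.eigenvalues_nonneg j)
        hr₀ hr₁).trans_eq (by ring)
  rw [traceR_cfc_const_mul hA.1, traceR_cfc_const_mul hB.1, cfc_neg, neg_mul, traceR_neg] at h
  exact h.trans_eq (sub_eq_add_neg _ _).symm

lemma mul_hellingerSq_le_of_one_lt (hA : A.PosSemidef) (hB : B.PosSemidef) (hAB : suppLe A B)
    (hr : 1 < r) :
    (r - 1) * hellingerSq A B ≤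
      traceR (mpow A r * mpow B (1 - r)) - r * traceR A + (r - 1) * traceR B := by
  have h := mul_hellingerSq_le_of_eigenvalues_le hA.1 hB.1 (h := (-r * ·)) (k := ((r - 1) * ·))
    (f := (· ^ r)) (g := (· ^ (1 - r))) fun i j hij =>
      (mul_sq_sqrt_sub_sqrt_le_of_one_lt (hA.eigenvalues_nonneg i) (hB.eigenvalues_nonneg j)
        (hAB.eigenvalues_eq_zero hij) hr).trans_eq (by ring)
  rw [traceR_cfc_const_mul hA.1, traceR_cfc_const_mul hB.1] at h
  exact h.trans_eq (by rw [mpow, mpow]; ring)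

lemma hellingerSq_le_relativeEntropy (hA : A.PosSemidef) (hB : B.PosSemidef)
    (hAB : suppLe A B) :
    hellingerSq A B ≤ traceR (A * mlog A - A * mlog B) - traceR A + traceR B := by
  have h := mul_hellingerSq_le_of_eigenvalues_le hA.1 hB.1 (c := 1)
    (h := fun x => x * Real.log x - x)
    (k := fun x => x) (f := fun x => -x) (g := Real.log) fun i j hij =>
      (one_mul _).trans_le ((sq_sqrt_sub_sqrt_le_log (hA.eigenvalues_nonneg i)
        (hB.eigenvalues_nonneg j) (hAB.eigenvalues_eq_zero hij)).trans_eq (by ring))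
  rw [cfc_sub _ _ A (continuousOn_spectrum _ A) (continuousOn_spectrum _ A),
    ← self_mul_cfc hA.1, cfc_neg, cfc_id_of_isHermitian hA.1, cfc_id_of_isHermitian hB.1,
    traceR_sub, neg_mul, traceR_neg, one_mul] at h
  rw [traceR_sub, mlog, mlog]
  linarith

end TraceInequalities

section Convergence

variable {ι : Type*} {l : Filter ι}

open scoped Matrix.Norms.Frobenius in
lemma frobenius_norm_sq (X : Mat n) : ‖X‖ ^ 2 = traceR (Xᴴ * X) := by
  rw [frobenius_norm_def, ← Real.sqrt_eq_rpow, Real.sq_sqrt (by positivity), Finset.sum_comm]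
  simp only [traceR, trace, diag_apply, mul_apply, conjTranspose_apply, Complex.re_sum,
    Complex.star_def, ← Complex.normSq_eq_conj_mul_self, Complex.ofReal_re, Real.rpow_two,
    Complex.normSq_eq_norm_sq]

open scoped Matrix.Norms.Frobenius in
lemma tendsto_zero_of_tendsto_traceR {X : ι → Mat n}
    (h : Tendsto (fun k => traceR ((X k)ᴴ * X k)) l (𝓝 0)) : Tendsto X l (𝓝 0) := by
  simp only [← frobenius_norm_sq] at h
  have := h.sqrt
  simp only [Real.sqrt_sq (norm_nonneg _), Real.sqrt_zero] at this
  exact tendsto_zero_iff_norm_tendsto_zero.mpr this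

lemma tendsto_of_mul_hellingerSq_le {T σ : ι → Mat n} {τ : Mat n} {c : ℝ} {e : ι → ℝ}
    (hT : ∀ k, (T k).PosSemidef) (hσ : ∀ k, (σ k).PosSemidef) (hτ : τ.PosSemidef)
    (hστ : Tendsto σ l (𝓝 τ)) (hc : 0 < c) (he : Tendsto e l (𝓝 0))
    (h : ∀ k, c * hellingerSq (T k) (σ k) ≤ e k) : Tendsto T l (𝓝 τ) := by
  have hdist : Tendsto (fun k => hellingerSq (T k) (σ k)) l (𝓝 0) :=
    squeeze_zero (fun k => hellingerSq_nonneg _ _)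
      (fun k => (le_inv_mul_iff₀ hc).mpr (h k)) (by simpa only [mul_zero] using he.const_mul c⁻¹)
  have hsqrtσ : Tendsto (fun k => cfc Real.sqrt (σ k)) l (𝓝 (cfc Real.sqrt τ)) :=
    tendsto_cfc Real.continuous_sqrt (fun k => (hσ k).1) hτ.1 hστ
  have hsqrtT : Tendsto (fun k => cfc Real.sqrt (T k)) l (𝓝 (cfc Real.sqrt τ)) := by
    simpa only [sub_add_cancel, zero_add] using (tendsto_zero_of_tendsto_traceR hdist).add hsqrtσ
  simpa only [star_eq_conjTranspose, sqrt_conjTranspose_mul_sqrt, hT, hτ]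
    using hsqrtT.star.mul hsqrtT

open scoped Matrix.Norms.Frobenius in
lemma isCompact_isDensity : IsCompact {ρ : Mat n | IsDensity ρ} := by
  have himage : {ρ : Mat n | IsDensity ρ} =
      (fun X : Mat n => Xᴴ * X) '' Metric.sphere (0 : Mat n) 1 := by
    ext ρ
    constructor
    · intro hρ
      refine ⟨cfc Real.sqrt ρ, ?_, sqrt_conjTranspose_mul_sqrt hρ.1⟩
      rw [mem_sphere_zero_iff_norm, ← sq_eq_sq₀ (norm_nonneg _) zero_le_one, frobenius_norm_sq,
        sqrt_conjTranspose_mul_sqrt hρ.1, hρ.traceR_eq_one, one_pow]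
    · rintro ⟨X, hX, rfl⟩
      have hpsd := posSemidef_conjTranspose_mul_self X
      rw [mem_sphere_zero_iff_norm] at hX
      exact ⟨hpsd, by rw [← ofReal_traceR hpsd, ← frobenius_norm_sq, hX, one_pow,
        Complex.ofReal_one]⟩
  rw [himage]
  exact (isCompact_sphere 0 1).image (by fun_prop)

end Convergence

section Sandwich

variable {p : ℝ} {ρ σ : Mat n}

lemma posSemidef_sandwich (p : ℝ) (hρ : ρ.PosSemidef) (σ : Mat n) :
    (sandwich p ρ σ).PosSemidef := by
  have := hρ.mul_mul_conjTranspose_same (mpow σ ((1 - p) / (2 * p)))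
  rwa [(isHermitian_mpow σ _).eq] at this

lemma sandwich_exponent_ne_zero (hp₀ : p ≠ 0) (hp₁ : p ≠ 1) : (1 - p) / (2 * p) ≠ 0 :=
  div_ne_zero (sub_ne_zero.mpr hp₁.symm) (mul_ne_zero two_ne_zero hp₀)

lemma suppLe_mpow_sandwich (hp₀ : p ≠ 0) (hp₁ : p ≠ 1) (hρ : ρ.PosSemidef)
    (hσ : σ.IsHermitian) : suppLe (mpow (sandwich p ρ σ) p) σ :=
  (suppLe_mpow (posSemidef_sandwich p hρ σ).1 hp₀).trans
    ((suppLe_mpow hσ (sandwich_exponent_ne_zero hp₀ hp₁)).mul_left _)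

lemma mpow_inv_mpow_sandwich (hp₀ : p ≠ 0) (hρ : ρ.PosSemidef) (σ : Mat n) :
    mpow (mpow (sandwich p ρ σ) p) p⁻¹ = sandwich p ρ σ := by
  have h := posSemidef_sandwich p hρ σ
  rw [mpow_mpow h, mul_inv_cancel₀ hp₀, mpow_one h.1]

lemma traceR_sandwich_mul_mpow (hp₀ : p ≠ 0) (hp₁ : p ≠ 1) (hσ : σ.PosSemidef) :
    traceR (sandwich p ρ σ * mpow σ (1 - p⁻¹)) = traceR (ρ * supportProj σ) := by
  have hs := neg_ne_zero.mpr (sandwich_exponent_ne_zero hp₀ hp₁)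
  have hexp : (1 - p) / (2 * p) + (1 - p⁻¹) = -((1 - p) / (2 * p)) := by field_simp; ring
  rw [sandwich, mul_assoc, mpow_mul_mpow hσ (hexp ▸ hs), hexp, traceR_mul_comm, ← mul_assoc,
    ← neg_neg ((1 - p) / (2 * p)), neg_neg (-_), mpow_mul_mpow_neg hσ hs, traceR_mul_comm]

lemma mpow_neg_mul_sandwich_mul_mpow_neg (hp₀ : p ≠ 0) (hp₁ : p ≠ 1) (ρ : Mat n)
    (hσ : σ.PosSemidef) :
    mpow σ (-((1 - p) / (2 * p))) * sandwich p ρ σ * mpow σ (-((1 - p) / (2 * p))) =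
      supportProj σ * ρ * supportProj σ := by
  have hs := sandwich_exponent_ne_zero hp₀ hp₁
  have hright := mpow_mul_mpow_neg hσ hs
  have hleft := mpow_mul_mpow_neg hσ (neg_ne_zero.mpr hs)
  rw [neg_neg] at hleft
  rw [sandwich, ← mul_assoc, ← mul_assoc, hleft, mul_assoc, hright]

lemma mpow_neg_mul_mpow_inv_mul_mpow_neg (hp : 0 < p) (hσ : σ.PosSemidef) :
    mpow σ (-((1 - p) / (2 * p))) * mpow σ p⁻¹ * mpow σ (-((1 - p) / (2 * p))) = σ := by
  have hhalf : -((1 - p) / (2 * p)) + p⁻¹ = (1 + p) / (2 * p) := by field_simp; ring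
  have hone : -((1 - p) / (2 * p)) + p⁻¹ + -((1 - p) / (2 * p)) = 1 := by field_simp; ring
  rw [mpow_mul_mpow_mul_mpow hσ (hhalf ▸ by positivity) (by rw [hone]; exact one_ne_zero),
    hone, mpow_one hσ.1]

lemma sandwich_self (hp : 0 < p) (hρ : ρ.PosSemidef) : sandwich p ρ ρ = mpow ρ p⁻¹ := by
  have hhalf : (1 - p) / (2 * p) + 1 = (1 + p) / (2 * p) := by field_simp; ring
  have hinv : (1 - p) / (2 * p) + 1 + (1 - p) / (2 * p) = p⁻¹ := by field_simp; ring
  rw [← hinv, ← mpow_mul_mpow_mul_mpow hρ (hhalf ▸ by positivity) (hinv ▸ by positivity),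
    mpow_one hρ.1, sandwich]

/-- The sandwiched quasi-entropy `Q_p(ρ‖σ)`, so that `D_p = (p - 1)⁻¹ log Q_p`; for `p > 1` this
holds only when the support of `ρ` is dominated by that of `σ`. -/
def sandwichedQ (p : ℝ) (ρ σ : Mat n) : ℝ := traceR (mpow (sandwich p ρ σ) p)

lemma sandwichedQ_nonneg (p : ℝ) (hρ : ρ.PosSemidef) (σ : Mat n) : 0 ≤ sandwichedQ p ρ σ :=
  traceR_nonneg (posSemidef_mpow (posSemidef_sandwich p hρ σ) p)

lemma sandwichedQ_self (hp : 0 < p) (hρ : IsDensity ρ) : sandwichedQ p ρ ρ = 1 := by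
  rw [sandwichedQ, sandwich_self hp hρ.1, mpow_mpow hρ.1, inv_mul_cancel₀ hp.ne',
    mpow_one hρ.1.1, hρ.traceR_eq_one]

lemma mul_hellingerSq_le_sandwichedQ_sub_one (hp : 1 < p) (hρ : IsDensity ρ)
    (hσ : IsDensity σ) (h : suppLe ρ σ) :
    (1 - p⁻¹) * hellingerSq (mpow (sandwich p ρ σ) p) σ ≤ sandwichedQ p ρ σ - 1 := by
  have hp₀ : 0 < p := zero_lt_one.trans hp
  have hyoung := mul_hellingerSq_le_of_lt_one
    (posSemidef_mpow (posSemidef_sandwich p hρ.1 σ) p) hσ.1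
    (inv_pos.mpr hp₀) (inv_lt_one_of_one_lt₀ hp)
  rw [mpow_inv_mpow_sandwich hp₀.ne' hρ.1, traceR_sandwich_mul_mpow hp₀.ne' hp.ne' hσ.1,
    h.mul_supportProj hσ.1.1, hρ.traceR_eq_one, hσ.traceR_eq_one, ← sandwichedQ] at hyoung
  refine le_of_mul_le_mul_left ?_ (inv_pos.mpr hp₀)
  linarith

lemma mul_hellingerSq_le_one_sub_sandwichedQ (hp₀ : 0 < p) (hp₁ : p < 1) (hρ : IsDensity ρ)
    (hσ : IsDensity σ) :
    (1 - p) * hellingerSq (mpow (sandwich p ρ σ) p) σ ≤ 1 - sandwichedQ p ρ σ := by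
  have hyoung := mul_hellingerSq_le_of_one_lt
    (posSemidef_mpow (posSemidef_sandwich p hρ.1 σ) p) hσ.1
    (suppLe_mpow_sandwich hp₀.ne' hp₁.ne hρ.1 hσ.1.1) ((one_lt_inv₀ hp₀).mpr hp₁)
  have hsupp := traceR_mul_le (isStarProjection_supportProj σ) hρ.1
  rw [mpow_inv_mpow_sandwich hp₀.ne' hρ.1, traceR_sandwich_mul_mpow hp₀.ne' hp₁.ne hσ.1,
    hσ.traceR_eq_one, ← sandwichedQ] at hyoung
  rw [hρ.traceR_eq_one] at hsupp
  refine le_of_mul_le_mul_left ?_ (inv_pos.mpr hp₀)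
  rw [← mul_assoc, mul_sub, inv_mul_cancel₀ hp₀.ne']
  linarith

end Sandwich

section Divergence

variable {p : ℝ≥0∞} {ρ σ : Mat n}

open scoped Matrix.Norms.L2Operator MatrixOrder in
lemma isClosed_posSemidef : IsClosed {A : Mat n | A.PosSemidef} := by
  simpa only [nonneg_iff_posSemidef] using CStarAlgebra.isClosed_nonneg (A := Mat n)

lemma one_le_of_posSemidef_smul_sub (hρ : IsDensity ρ) (hσ : IsDensity σ) {c : ℝ}
    (h : (c • σ - ρ).PosSemidef) : 1 ≤ c := by
  have := traceR_nonneg h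
  rwa [traceR_sub, traceR_smul, hρ.traceR_eq_one, hσ.traceR_eq_one, mul_one, sub_nonneg] at this

lemma posSemidef_exp_smul_sub_of_Dinf_eq (hρ : IsDensity ρ) (hσ : IsDensity σ) {d : ℝ}
    (h : Dinf ρ σ = (d : EReal)) : (Real.exp d • σ - ρ).PosSemidef := by
  rw [Dinf] at h
  split_ifs at h with hne
  · set S := {c : ℝ | 0 ≤ c ∧ (c • σ - ρ).PosSemidef}
    have hclosed : IsClosed S := isClosed_Ici.inter <| isClosed_posSemidef.preimage <|
      (continuous_id.smul continuous_const).sub continuous_const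
    have hmem : sInf S ∈ S := hclosed.csInf_mem hne ⟨0, fun c hc => hc.1⟩
    rw [← EReal.coe_eq_coe_iff.mp h, Real.exp_log (zero_lt_one.trans_le
      (one_le_of_posSemidef_smul_sub hρ hσ hmem.2))]
    exact hmem.2
  · exact absurd h.symm (EReal.coe_ne_top d)

lemma Dinf_self (hρ : IsDensity ρ) : Dinf ρ ρ = 0 := by
  have hleast : IsLeast {c : ℝ | 0 ≤ c ∧ (c • ρ - ρ).PosSemidef} 1 :=
    ⟨⟨zero_le_one, by simpa using PosSemidef.zero⟩,
      fun c hc => one_le_of_posSemidef_smul_sub hρ hρ hc.2⟩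
  rw [Dinf, if_pos ⟨1, hleast.1⟩, hleast.csInf_eq, Real.log_one, EReal.coe_zero]

lemma suppLe_and_traceR_eq_of_DU_eq {d : ℝ} (h : DU ρ σ = (d : EReal)) :
    suppLe ρ σ ∧ traceR (ρ * mlog ρ - ρ * mlog σ) = d := by
  rw [DU] at h
  split_ifs at h with hsupp
  · exact ⟨hsupp, EReal.coe_eq_coe_iff.mp h⟩
  · exact absurd h.symm (EReal.coe_ne_top d)

lemma sandwichedQ_eq_exp_of_Dp_eq (hp : p ≠ ⊤) (hp₁ : p ≠ 1) (hρ : ρ.PosSemidef) {d : ℝ}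
    (h : Dp p ρ σ = (d : EReal)) :
    sandwichedQ p.toReal ρ σ = Real.exp ((p.toReal - 1) * d) := by
  have hpr : p.toReal - 1 ≠ 0 := sub_ne_zero.mpr fun h => hp₁ ((ENNReal.toReal_eq_one_iff p).mp h)
  rw [Dp, if_neg hp, if_neg hp₁] at h
  split_ifs at h with hsupp hQ
  · exact absurd h.symm (EReal.coe_ne_top d)
  · exact absurd h.symm (EReal.coe_ne_top d)
  · rw [← EReal.coe_eq_coe_iff.mp h, mul_inv_cancel_left₀ hpr, Real.exp_log]
    · rfl
    · exact (sandwichedQ_nonneg _ hρ σ).lt_of_ne' hQ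

lemma suppLe_of_Dp_eq (hp : p ≠ ⊤) (hp₁ : 1 < p) {d : ℝ} (h : Dp p ρ σ = (d : EReal)) :
    suppLe ρ σ := by
  by_contra hsupp
  have hpr : 1 < p.toReal := (ENNReal.toReal_lt_toReal ENNReal.one_ne_top hp).mpr hp₁
  rw [Dp, if_neg hp, if_neg hp₁.ne', if_pos ⟨hpr, hsupp⟩] at h
  exact EReal.coe_ne_top d h.symm

lemma Dp_ne_bot (p : ℝ≥0∞) (ρ σ : Mat n) : Dp p ρ σ ≠ ⊥ := by
  unfold Dp Dinf DU
  split_ifs <;> first | exact top_ne_bot | exact EReal.coe_ne_bot _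

lemma nonneg_of_Dp_eq (hp : p ≠ 0) (hρ : IsDensity ρ) (hσ : IsDensity σ) {d : ℝ}
    (h : Dp p ρ σ = (d : EReal)) : 0 ≤ d := by
  rcases eq_or_ne p ⊤ with rfl | hp_top
  · rw [Dp, if_pos rfl] at h
    exact Real.one_le_exp_iff.mp <| one_le_of_posSemidef_smul_sub hρ hσ
      (posSemidef_exp_smul_sub_of_Dinf_eq hρ hσ h)
  rcases lt_trichotomy p 1 with hp₁ | rfl | hp₁
  · have hpr : p.toReal < 1 := (ENNReal.toReal_lt_toReal hp_top ENNReal.one_ne_top).mpr hp₁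
    have hQ := mul_hellingerSq_le_one_sub_sandwichedQ (ENNReal.toReal_pos hp hp_top) hpr hρ hσ
    rw [sandwichedQ_eq_exp_of_Dp_eq hp_top hp₁.ne hρ.1 h] at hQ
    have := (mul_nonneg (sub_nonneg.mpr hpr.le) (hellingerSq_nonneg _ _)).trans hQ
    have := Real.exp_le_one_iff.mp (sub_nonneg.mp this)
    exact nonneg_of_mul_nonpos_right this (sub_neg.mpr hpr)
  · rw [Dp, if_neg hp_top, if_pos rfl] at h
    obtain ⟨hsupp, rfl⟩ := suppLe_and_traceR_eq_of_DU_eq h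
    have hklein := hellingerSq_le_relativeEntropy hρ.1 hσ.1 hsupp
    rw [hρ.traceR_eq_one, hσ.traceR_eq_one, sub_add_cancel] at hklein
    exact (hellingerSq_nonneg _ _).trans hklein
  · have hpr : 1 < p.toReal := (ENNReal.toReal_lt_toReal ENNReal.one_ne_top hp_top).mpr hp₁
    have hQ := mul_hellingerSq_le_sandwichedQ_sub_one hpr hρ hσ (suppLe_of_Dp_eq hp_top hp₁ h)
    rw [sandwichedQ_eq_exp_of_Dp_eq hp_top hp₁.ne' hρ.1 h] at hQ
    have := (mul_nonneg (sub_nonneg.mpr (inv_le_one_of_one_le₀ hpr.le))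
      (hellingerSq_nonneg _ _)).trans hQ
    have := Real.one_le_exp_iff.mp (sub_nonneg.mp this)
    exact nonneg_of_mul_nonneg_right this (sub_pos.mpr hpr)

theorem Dp_nonneg (hp : p ≠ 0) (hρ : IsDensity ρ) (hσ : IsDensity σ) : 0 ≤ Dp p ρ σ := by
  induction h : Dp p ρ σ with
  | bot => exact absurd h (Dp_ne_bot p ρ σ)
  | coe d => exact EReal.coe_nonneg.mpr (nonneg_of_Dp_eq hp hρ hσ h)
  | top => exact le_top

theorem Dp_self (hp : p ≠ 0) (hρ : IsDensity ρ) : Dp p ρ ρ = 0 := by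
  rcases eq_or_ne p ⊤ with rfl | hp_top
  · rw [Dp, if_pos rfl, Dinf_self hρ]
  rcases eq_or_ne p 1 with rfl | hp₁
  · rw [Dp, if_neg hp_top, if_pos rfl, DU, if_pos (suppLe_refl ρ), sub_self, traceR, trace_zero,
      Complex.zero_re, EReal.coe_zero]
  · have hQ : traceR (mpow (sandwich p.toReal ρ ρ) p.toReal) = 1 :=
      sandwichedQ_self (ENNReal.toReal_pos hp hp_top) hρ
    rw [Dp, if_neg hp_top, if_neg hp₁, if_neg fun h => h.2 (suppLe_refl ρ), hQ,
      if_neg one_ne_zero, Real.log_one, mul_zero, EReal.coe_zero]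

end Divergence

section Limits

variable {ι : Type*} {l : Filter ι} {ρ τ : Mat n} {σ : ι → Mat n}

lemma tendsto_sandwich_of_tendsto_mpow {p : ℝ} (hp : 0 < p) (hρ : ρ.PosSemidef)
    (hτ : τ.PosSemidef) (h : Tendsto (fun k => mpow (sandwich p ρ (σ k)) p) l (𝓝 τ)) :
    Tendsto (fun k => sandwich p ρ (σ k)) l (𝓝 (mpow τ p⁻¹)) := by
  simpa only [mpow_inv_mpow_sandwich hp.ne' hρ] using tendsto_mpow (inv_nonneg.mpr hp.le)
    (fun k => posSemidef_mpow (posSemidef_sandwich p hρ (σ k)) p) hτ h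

variable [l.NeBot]

lemma eq_of_tendsto_smul_sub_posSemidef (hρ : IsDensity ρ) (hτ : IsDensity τ)
    (hστ : Tendsto σ l (𝓝 τ)) {c : ι → ℝ} (hc : Tendsto c l (𝓝 1))
    (h : ∀ k, (c k • σ k - ρ).PosSemidef) : ρ = τ := by
  have hlim : Tendsto (fun k => c k • σ k - ρ) l (𝓝 (τ - ρ)) := by
    simpa only [one_smul] using (hc.smul hστ).sub_const ρ
  have hpsd : (τ - ρ).PosSemidef := isClosed_posSemidef.mem_of_tendsto hlim (.of_forall h)
  refine (sub_eq_zero.mp (eq_zero_of_traceR_nonpos hpsd ?_)).symm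
  rw [traceR_sub, hτ.traceR_eq_one, hρ.traceR_eq_one, sub_self]

lemma eq_of_tendsto_relativeEntropy (hρ : IsDensity ρ) (hσ : ∀ k, IsDensity (σ k))
    (hτ : IsDensity τ) (hστ : Tendsto σ l (𝓝 τ)) (hsupp : ∀ k, suppLe ρ (σ k))
    (h : Tendsto (fun k => traceR (ρ * mlog ρ - ρ * mlog (σ k))) l (𝓝 0)) : ρ = τ := by
  have hlim : Tendsto (fun _ : ι => ρ) l (𝓝 τ) := by
    refine tendsto_of_mul_hellingerSq_le (fun _ => hρ.1) (fun k => (hσ k).1) hτ.1 hστ one_pos h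
      fun k => ?_
    have := hellingerSq_le_relativeEntropy hρ.1 (hσ k).1 (hsupp k)
    rwa [hρ.traceR_eq_one, (hσ k).traceR_eq_one, sub_add_cancel, ← one_mul (hellingerSq _ _)]
      at this
  exact tendsto_nhds_unique tendsto_const_nhds hlim

lemma eq_of_tendsto_sandwichedQ_of_one_lt {p : ℝ} (hp : 1 < p) (hρ : IsDensity ρ)
    (hσ : ∀ k, IsDensity (σ k)) (hτ : IsDensity τ) (hστ : Tendsto σ l (𝓝 τ))
    (hsupp : ∀ k, suppLe ρ (σ k))
    (hQ : Tendsto (fun k => sandwichedQ p ρ (σ k)) l (𝓝 1)) : ρ = τ := by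
  have hp₀ : 0 < p := zero_lt_one.trans hp
  have hsandwich : Tendsto (fun k => sandwich p ρ (σ k)) l (𝓝 (mpow τ p⁻¹)) :=
    tendsto_sandwich_of_tendsto_mpow hp₀ hρ.1 hτ.1 <| tendsto_of_mul_hellingerSq_le
      (fun k => posSemidef_mpow (posSemidef_sandwich p hρ.1 (σ k)) p) (fun k => (hσ k).1) hτ.1
      hστ (sub_pos.mpr (inv_lt_one_of_one_lt₀ hp))
      (by simpa only [sub_self] using hQ.sub_const 1)
      fun k => mul_hellingerSq_le_sandwichedQ_sub_one hp hρ (hσ k) (hsupp k)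
  have hexp : 0 ≤ -((1 - p) / (2 * p)) := by
    rw [← neg_div, neg_sub]
    exact div_nonneg (sub_nonneg.mpr hp.le) (by positivity)
  have houter := tendsto_mpow hexp (fun k => (hσ k).1) hτ.1 hστ
  have hlim := (houter.mul hsandwich).mul houter
  simp only [mpow_neg_mul_sandwich_mul_mpow_neg hp₀.ne' hp.ne' ρ (hσ _).1,
    (hsupp _).supportProj_mul_mul_supportProj hρ.1.1 (hσ _).1.1,
    mpow_neg_mul_mpow_inv_mul_mpow_neg hp₀ hτ.1] at hlim
  exact tendsto_nhds_unique tendsto_const_nhds hlim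

lemma eq_of_tendsto_sandwichedQ_of_lt_one {p : ℝ} (hp₀ : 0 < p) (hp₁ : p < 1)
    (hρ : IsDensity ρ) (hσ : ∀ k, IsDensity (σ k)) (hτ : IsDensity τ)
    (hστ : Tendsto σ l (𝓝 τ))
    (hQ : Tendsto (fun k => sandwichedQ p ρ (σ k)) l (𝓝 1)) : ρ = τ := by
  have hsandwich : Tendsto (fun k => sandwich p ρ (σ k)) l (𝓝 (mpow τ p⁻¹)) :=
    tendsto_sandwich_of_tendsto_mpow hp₀ hρ.1 hτ.1 <| tendsto_of_mul_hellingerSq_le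
      (fun k => posSemidef_mpow (posSemidef_sandwich p hρ.1 (σ k)) p) (fun k => (hσ k).1) hτ.1
      hστ (sub_pos.mpr hp₁) (by simpa only [sub_self] using hQ.const_sub 1)
      fun k => mul_hellingerSq_le_one_sub_sandwichedQ hp₀ hp₁ hρ (hσ k)
  have hexp : 0 ≤ (1 - p) / (2 * p) := div_nonneg (sub_nonneg.mpr hp₁.le) (by positivity)
  have houter := tendsto_mpow hexp (fun k => (hσ k).1) hτ.1 hστ
  have hlimit : sandwich p ρ τ = mpow τ p⁻¹ :=
    tendsto_nhds_unique ((houter.mul_const ρ).mul houter) hsandwich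
  have hcomp : supportProj τ * ρ * supportProj τ = τ := by
    rw [← mpow_neg_mul_sandwich_mul_mpow_neg hp₀.ne' hp₁.ne ρ hτ.1, hlimit,
      mpow_neg_mul_mpow_inv_mul_mpow_neg hp₀ hτ.1]
  have htrace : traceR (ρ * supportProj τ) = traceR ρ := by
    rw [← traceR_compression (isStarProjection_supportProj τ), hcomp, hτ.traceR_eq_one,
      hρ.traceR_eq_one]
  rw [← hcomp]
  exact (compression_eq_self_of_traceR_eq (isStarProjection_supportProj τ) hρ.1 htrace).symm

theorem eq_of_tendsto_Dp {p : ℝ≥0∞} (hp : p ≠ 0) (hρ : IsDensity ρ)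
    (hσ : ∀ k, IsDensity (σ k)) (hτ : IsDensity τ) (hστ : Tendsto σ l (𝓝 τ)) {d : ι → ℝ}
    (hD : ∀ k, Dp p ρ (σ k) = (d k : EReal)) (hd : Tendsto d l (𝓝 0)) : ρ = τ := by
  rcases eq_or_ne p ⊤ with rfl | hp_top
  · simp only [Dp, if_true] at hD
    refine eq_of_tendsto_smul_sub_posSemidef hρ hτ hστ ?_
      fun k => posSemidef_exp_smul_sub_of_Dinf_eq hρ (hσ k) (hD k)
    simpa only [Real.exp_zero] using hd.rexp
  have hQ (hp₁ : p ≠ 1) : Tendsto (fun k => sandwichedQ p.toReal ρ (σ k)) l (𝓝 1) := by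
    simp only [sandwichedQ_eq_exp_of_Dp_eq hp_top hp₁ hρ.1 (hD _)]
    simpa only [mul_zero, Real.exp_zero] using (hd.const_mul (p.toReal - 1)).rexp
  rcases lt_trichotomy p 1 with hp₁ | rfl | hp₁
  · exact eq_of_tendsto_sandwichedQ_of_lt_one (ENNReal.toReal_pos hp hp_top)
      ((ENNReal.toReal_lt_toReal hp_top ENNReal.one_ne_top).mpr hp₁) hρ hσ hτ hστ (hQ hp₁.ne)
  · simp only [Dp, if_neg hp_top, if_true] at hD
    have hDU := fun k => suppLe_and_traceR_eq_of_DU_eq (hD k)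
    refine eq_of_tendsto_relativeEntropy hρ hσ hτ hστ (fun k => (hDU k).1) ?_
    simpa only [(hDU _).2] using hd
  · exact eq_of_tendsto_sandwichedQ_of_one_lt
      ((ENNReal.toReal_lt_toReal ENNReal.one_ne_top hp_top).mpr hp₁) hρ hσ hτ hστ
      (fun k => suppLe_of_Dp_eq hp_top hp₁ (hD k)) (hQ hp₁.ne')

end Limits

section Infimum

variable {p : ℝ≥0∞} {ρ : Mat n} {S : Set (Mat n)}

lemma exists_Dp_eq_of_DpSet_eq_zero (hp : p ≠ 0) (hρ : IsDensity ρ) (h : DpSet p ρ S = 0)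
    {ε : ℝ} (hε : 0 < ε) :
    ∃ σ ∈ S, IsDensity σ ∧ ∃ d : ℝ, Dp p ρ σ = (d : EReal) ∧ 0 ≤ d ∧ d < ε := by
  have hlt : DpSet p ρ S < (ε : EReal) := h ▸ EReal.coe_pos.mpr hε
  simp only [DpSet, iInf_lt_iff] at hlt
  obtain ⟨σ, ⟨hσS, hσ⟩, hσε⟩ := hlt
  obtain ⟨d, hd⟩ : ∃ d : ℝ, Dp p ρ σ = (d : EReal) :=
    ⟨_, (EReal.coe_toReal hσε.ne_top (Dp_ne_bot p ρ σ)).symm⟩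
  exact ⟨σ, hσS, hσ, d, hd, nonneg_of_Dp_eq hp hρ hσ hd, EReal.coe_lt_coe_iff.mp (hd ▸ hσε)⟩

lemma mem_of_DpSet_eq_zero (hS : IsClosed S) (hp : p ≠ 0) (hρ : IsDensity ρ)
    (h : DpSet p ρ S = 0) : ρ ∈ S := by
  choose σ hσS hσ d hD hd₀ hdlt using fun k : ℕ =>
    exists_Dp_eq_of_DpSet_eq_zero hp hρ h (Nat.one_div_pos_of_nat (α := ℝ) (n := k))
  have hd : Tendsto d atTop (𝓝 0) :=
    squeeze_zero hd₀ (fun k => (hdlt k).le) tendsto_one_div_add_atTop_nhds_zero_nat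
  have : FirstCountableTopology (Mat n) := inferInstanceAs (FirstCountableTopology (n → n → ℂ))
  obtain ⟨τ, hτ, φ, hφ, hlim⟩ := isCompact_isDensity.tendsto_subseq hσ
  rw [eq_of_tendsto_Dp hp hρ (fun k => hσ (φ k)) hτ hlim (fun k => hD (φ k))
    (hd.comp hφ.tendsto_atTop)]
  exact hS.mem_of_tendsto hlim (.of_forall fun k => hσS (φ k))

theorem statement4_general (hS : IsClosed S) (hp : p ≠ 0) (hρ : IsDensity ρ) :
    0 ≤ DpSet p ρ S ∧ (DpSet p ρ S = 0 ↔ ρ ∈ S) := by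
  have hnonneg : 0 ≤ DpSet p ρ S := le_iInf₂ fun σ hσ => Dp_nonneg hp hρ hσ.2
  exact ⟨hnonneg, mem_of_DpSet_eq_zero hS hp hρ,
    fun h => le_antisymm ((iInf₂_le ρ ⟨h, hρ⟩).trans (Dp_self hp hρ).le) hnonneg⟩

end Infimum

/-- for `p ∈ [1/2,∞]` and a density `ρ`, `D_p(ρ‖N) ≥ 0`, with
equality iff `ρ ∈ N`. -/
theorem statement4 {m : ℕ} (N : StarSubalgebra ℂ (Mat (Fin m)))
    (p : ℝ≥0∞) (hp : 2⁻¹ ≤ p) (ρ : Mat (Fin m)) (hρ : IsDensity ρ) :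
    0 ≤ DpSet p ρ (N : Set (Mat (Fin m))) ∧
    (DpSet p ρ (N : Set (Mat (Fin m))) = 0 ↔ ρ ∈ N) :=
  statement4_general (Submodule.closed_of_finiteDimensional N.toSubalgebra.toSubmodule)
    ((ENNReal.inv_pos.mpr ENNReal.ofNat_ne_top).trans_le hp).ne' hρ

end GJL
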